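/- Let α > 0 and let a, b, c be real numbers with ac − b² > 0 (hence b² + c² > 0). Let A : ℝ → ℝ be a smooth 1-periodic function with ∫₀¹ A(x) dx = −α·(ac − b²). Then there exists a smooth 1-periodic function φ : ℝ → ℝ with 1 + φ''(x) > 0 for all x, such that for all x ∈ ℝ: −(1/4)·(d²/dx²)(1/(1+φ''(x))) − α·b²·(ac − b²)·(1 + φ''(x))/(b² + c²) − α·c²·(ac − b²)/(b² + c²) = A(x). -/

import Mathlib

open Function Set
open scoped ContDiff

/-!
Substituting `v = 1 / (1 + φ'')` turns the equation into `v'' = h - κ / v` with `κ ≥ 0`, to be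
solved by a positive periodic `v`, and the periodicity of `φ'` into the constraint that `1 / v` has
mean one. For `κ > 0` the constraint follows by integrating the equation, and the nonlinearity
`-κ / v` is increasing, so that a comparison principle holds and a solution lies between a constant
lower solution and an explicit upper solution. For `κ = 0` the function `v` is a second primitive
of `h` plus a constant, and the constraint determines the constant.
-/

section Calculus

variable {f g r : ℝ → ℝ} {x : ℝ}

lemma deriv_deriv_sub (hf : ContDiff ℝ 2 f) (hg : ContDiff ℝ 2 g) (x : ℝ) :
    deriv (deriv fun y => f y - g y) x = deriv (deriv f) x - deriv (deriv g) x := by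
  simpa only [iteratedDeriv_succ, iteratedDeriv_zero] using
    iteratedDeriv_fun_sub (n := 2) (x := x) hf.contDiffAt hg.contDiffAt

lemma deriv_deriv_nonpos_of_isLocalMax (hmax : IsLocalMax f x) (hf : ContinuousAt f x) :
    deriv (deriv f) x ≤ 0 := by
  by_contra! hpos
  have hmin : IsLocalMin f x := isLocalMin_of_deriv_deriv_pos hpos hmax.deriv_eq_zero hf
  have hconst : f =ᶠ[nhds x] fun _ => f x := by
    filter_upwards [hmax, hmin] with y hle hge using le_antisymm hle hge
  simp [hconst.deriv.deriv_eq] at hpos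

lemma contDiff_two_iff_deriv :
    ContDiff ℝ 2 f ↔ Differentiable ℝ f ∧ ContDiff ℝ 1 (deriv f) := by
  rw [← one_add_one_eq_two, contDiff_succ_iff_deriv]
  simp

lemma contDiff_infty_of_bootstrap (hf : ContDiff ℝ 2 f)
    (hstep : ∀ n : ℕ, ContDiff ℝ n f → ContDiff ℝ n (deriv (deriv f))) : ContDiff ℝ ∞ f := by
  obtain ⟨hd, hf'⟩ := contDiff_two_iff_deriv.1 hf
  refine contDiff_infty.2 fun n => ?_
  induction n with
  | zero => exact contDiff_zero.2 hf.continuous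
  | succ n ih =>
    have hderiv : ContDiff ℝ (n + 1) (deriv f) :=
      contDiff_succ_iff_deriv.2 ⟨hf'.differentiable one_ne_zero, by simp, hstep n ih⟩
    exact_mod_cast contDiff_succ_iff_deriv.2 ⟨hd, by simp, hderiv.of_le le_self_add⟩

lemma contDiff_one_of_hasDerivAt (hr : Continuous r) (hf : ∀ x, HasDerivAt f (r x) x) :
    ContDiff ℝ 1 f := by
  have hderiv : deriv f = r := funext fun x => (hf x).deriv
  exact contDiff_one_iff_deriv.2 ⟨fun x => (hf x).differentiableAt, hderiv ▸ hr⟩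

end Calculus

section PeriodicFunctions

variable {f r u : ℝ → ℝ} {s T : ℝ}

lemma periodic_deriv (hf : Periodic f T) : Periodic (deriv f) T := fun x => by
  rw [← deriv_comp_add_const, funext hf]

lemma integral_deriv_eq_zero_of_periodic (hf : ContDiff ℝ 1 f) (hfp : Periodic f T) :
    ∫ x in (0 : ℝ)..T, deriv f x = 0 := by
  rw [intervalIntegral.integral_deriv_eq_sub
    (fun x _ => hf.differentiable one_ne_zero x)
    ((hf.continuous_deriv le_rfl).intervalIntegrable _ _), hfp.eq, sub_self]

lemma exists_forall_le_of_periodic (hf : Continuous f) (hfp : Periodic f T) (hT : T ≠ 0) :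
    ∃ a, ∀ x, f x ≤ f a := by
  obtain ⟨_, ⟨a, rfl⟩, ha⟩ :=
    (hfp.compact_of_continuous hT hf).exists_isGreatest (range_nonempty f)
  exact ⟨a, fun x => ha (mem_range_self x)⟩

lemma exists_lipschitzWith_of_periodic (hf : ContDiff ℝ 1 f) (hfp : Periodic f T) (hT : T ≠ 0) :
    ∃ K, LipschitzWith K f := by
  have hf' : Continuous fun x => ‖deriv f x‖₊ := (hf.continuous_deriv le_rfl).nnnorm
  have hf'p : Periodic (fun x => ‖deriv f x‖₊) T := (periodic_deriv hfp).comp _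
  obtain ⟨K, hK⟩ := (hf'p.compact_of_continuous hT hf').bddAbove
  exact ⟨K, lipschitzWith_of_nnnorm_deriv_le (hf.differentiable one_ne_zero)
    fun x => hK (mem_range_self x)⟩

lemma integral_sub_integral_div_eq_zero (hr : IntervalIntegrable r MeasureTheory.volume 0 T)
    (hT : T ≠ 0) : ∫ x in (0 : ℝ)..T, (r x - (∫ t in (0 : ℝ)..T, r t) / T) = 0 := by
  rw [intervalIntegral.integral_sub hr (by simp), intervalIntegral.integral_const, sub_zero,
    smul_eq_mul, mul_div_cancel₀ _ hT, sub_self]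

lemma exists_periodic_primitive (hr : Continuous r) (hrp : Periodic r T)
    (hr₀ : ∫ x in (0 : ℝ)..T, r x = 0) (hT : T ≠ 0) :
    ∃ p : ℝ → ℝ, Periodic p T ∧ (∀ x, HasDerivAt p (r x) x) ∧ ∫ x in (0 : ℝ)..T, p x = 0 := by
  set P : ℝ → ℝ := fun x => ∫ t in (0 : ℝ)..x, r t with hP
  have hPd (x : ℝ) : HasDerivAt P (r x) x := (hr.integral_hasStrictDerivAt 0 x).hasDerivAt
  have hPc : Continuous P := (contDiff_one_of_hasDerivAt hr hPd).continuous
  have hPp : Periodic P T := fun x => by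
    simp only [hP]
    rw [hrp.intervalIntegral_add_eq_add 0 x fun _ _ => hr.intervalIntegrable _ _]
    simp [hr₀]
  refine ⟨fun x => P x - (∫ t in (0 : ℝ)..T, P t) / T, fun x => by simp only [hPp x],
    fun x => (hPd x).sub_const _,
    integral_sub_integral_div_eq_zero (hPc.intervalIntegrable _ _) hT⟩

lemma exists_periodic_deriv_deriv_eq (hr : Continuous r) (hrp : Periodic r T)
    (hr₀ : ∫ x in (0 : ℝ)..T, r x = 0) (hT : T ≠ 0) :
    ∃ p : ℝ → ℝ, ContDiff ℝ 2 p ∧ Periodic p T ∧ ∀ x, deriv (deriv p) x = r x := by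
  obtain ⟨q, hqp, hqd, hq₀⟩ := exists_periodic_primitive hr hrp hr₀ hT
  have hq : ContDiff ℝ 1 q := contDiff_one_of_hasDerivAt hr hqd
  obtain ⟨p, hpp, hpd, -⟩ := exists_periodic_primitive hq.continuous hqp hq₀ hT
  have hp' : deriv p = q := funext fun x => (hpd x).deriv
  exact ⟨p, contDiff_two_iff_deriv.2 ⟨fun x => (hpd x).differentiableAt, hp' ▸ hq⟩, hpp,
    fun x => by rw [hp', (hqd x).deriv]⟩

lemma exists_periodic_deriv_deriv_eq_isLeast (c : ℝ) (hr : Continuous r) (hrp : Periodic r T)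
    (hr₀ : ∫ x in (0 : ℝ)..T, r x = 0) (hT : T ≠ 0) :
    ∃ p : ℝ → ℝ, ContDiff ℝ 2 p ∧ Periodic p T ∧ (∀ x, deriv (deriv p) x = r x) ∧
      IsLeast (range p) c := by
  obtain ⟨p, hp, hpp, hpd⟩ := exists_periodic_deriv_deriv_eq hr hrp hr₀ hT
  obtain ⟨_, ⟨a, rfl⟩, ha⟩ :=
    (hpp.compact_of_continuous hT hp.continuous).exists_isLeast (range_nonempty p)
  refine ⟨fun x => p x - (p a - c), hp.sub contDiff_const, fun x => by simp only [hpp x],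
    fun x => ?_, ⟨a, sub_sub_cancel _ _⟩, forall_mem_range.2 fun x => ?_⟩
  · rw [deriv_deriv_sub hp contDiff_const, hpd]
    simp
  · linarith [ha (mem_range_self x)]

lemma inv_mul_log_le_integral_one_div_add {a C L : ℝ} (hu : Continuous u) (hu₀ : ∀ x, 0 ≤ u x)
    (hL : 0 < L) (hC : 0 < C) (hT : 0 ≤ T) (hle : ∀ x ∈ Icc a (a + T), u x ≤ L * (x - a)) :
    L⁻¹ * Real.log (1 + L * T / C) ≤ ∫ x in a..a + T, 1 / (u x + C) := by
  have hpos (x : ℝ) : 0 < u x + C := add_pos_of_nonneg_of_pos (hu₀ x) hC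
  have hlin {x : ℝ} (hx : x ∈ Icc a (a + T)) : 0 < L * (x - a) + C :=
    add_pos_of_nonneg_of_pos (mul_nonneg hL.le (sub_nonneg.2 hx.1)) hC
  have hab : a ≤ a + T := le_add_of_nonneg_right hT
  calc L⁻¹ * Real.log (1 + L * T / C)
      = ∫ x in a..a + T, (L * x + (C - L * a))⁻¹ := by
        rw [intervalIntegral.integral_comp_mul_add (fun x => x⁻¹) hL.ne', integral_inv_of_pos
          (by linarith) (by nlinarith), smul_eq_mul]
        congr 2
        have : L * a + (C - L * a) = C := by ring
        rw [this]
        field_simp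
        ring
    _ = ∫ x in a..a + T, 1 / (L * (x - a) + C) := by
        congr 1 with x
        rw [one_div]
        ring
    _ ≤ ∫ x in a..a + T, 1 / (u x + C) := by
        refine intervalIntegral.integral_mono_on hab ?_
          ((continuous_const.div (hu.add continuous_const) fun x => (hpos x).ne').intervalIntegrable
            _ _) fun x hx => one_div_le_one_div_of_le (hpos x) (by gcongr; exact hle x hx)
        refine ContinuousOn.intervalIntegrable (continuousOn_const.div (by fun_prop) ?_)
        rw [uIcc_of_le hab]
        exact fun x hx => (hlin hx).ne'

/- Near a zero `a`, `u ≤ L |x - a|`, so the integral diverges like `L⁻¹ log (1 / C)` as `C → 0`. -/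
lemma exists_pos_integral_one_div_add_const_eq {K : NNReal} (hu : LipschitzWith K u)
    (hup : Periodic u T) (hT : 0 < T) (hu₀ : ∀ x, 0 ≤ u x) {a : ℝ} (ha : u a = 0) (hs : 0 < s) :
    ∃ C, 0 < C ∧ ∫ x in (0 : ℝ)..T, 1 / (u x + C) = s := by
  set I : ℝ → ℝ := fun C => ∫ x in (0 : ℝ)..T, 1 / (u x + C)
  have hpos {C : ℝ} (hC : 0 < C) (x : ℝ) : 0 < u x + C := add_pos_of_nonneg_of_pos (hu₀ x) hC
  have hint {C : ℝ} (hC : 0 < C) (x y : ℝ) :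
      IntervalIntegrable (fun x => 1 / (u x + C)) MeasureTheory.volume x y :=
    (continuous_const.div (hu.continuous.add continuous_const)
      fun x => (hpos hC x).ne').intervalIntegrable x y
  have hIc : ContinuousOn I (Ioi 0) := by
    rw [continuousOn_iff_continuous_domRestrict]
    refine intervalIntegral.continuous_parametric_intervalIntegral_of_continuous' ?_ 0 T
    have := hu.continuous
    exact continuous_const.div (by fun_prop) fun p => (hpos p.1.2 p.2).ne'
  have hsmall : I (T / s) ≤ s := by
    have hC : 0 < T / s := by positivity
    calc I (T / s) ≤ ∫ _ in (0 : ℝ)..T, 1 / (T / s) :=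
          intervalIntegral.integral_mono_on hT.le (hint hC _ _) (by simp) fun x _ =>
            one_div_le_one_div_of_le hC (le_add_of_nonneg_left (hu₀ x))
      _ = s := by simp; field_simp
  set L : ℝ := K + 1
  have hL : 0 < L := by positivity
  set δ : ℝ := L * T / Real.exp (L * s)
  have hδ : 0 < δ := by positivity
  have hlarge : s ≤ I δ := by
    have hper : Periodic (fun x => 1 / (u x + δ)) T := fun x => by simp only [hup x]
    have hle (x : ℝ) (hx : x ∈ Icc a (a + T)) : u x ≤ L * (x - a) := by
      have hxa : 0 ≤ x - a := sub_nonneg.2 hx.1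
      have hux := hu.dist_le_mul x a
      rw [Real.dist_eq, Real.dist_eq, ha, sub_zero, abs_of_nonneg (hu₀ x),
        abs_of_nonneg hxa] at hux
      exact hux.trans (by gcongr; exact le_add_of_nonneg_right zero_le_one)
    calc s = L⁻¹ * Real.log (Real.exp (L * s)) := by rw [Real.log_exp]; field_simp
      _ ≤ L⁻¹ * Real.log (1 + L * T / δ) := by
          have hδexp : L * T / δ = Real.exp (L * s) := by simp only [δ]; field_simp
          rw [hδexp]
          gcongr
          exact le_add_of_nonneg_left zero_le_one
      _ ≤ ∫ x in a..a + T, 1 / (u x + δ) :=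
          inv_mul_log_le_integral_one_div_add hu.continuous hu₀ hL hδ hT.le hle
      _ = I δ := by simpa only [zero_add] using hper.intervalIntegral_add_eq a 0
  exact isPreconnected_Ioi.intermediate_value (div_pos hT hs) hδ hIc ⟨hsmall, hlarge⟩

end PeriodicFunctions

section PeriodicBoundaryValueProblem

variable {F : ℝ → ℝ → ℝ} {g r u v w : ℝ → ℝ} {k lo hi m M R T : ℝ}

/- At a maximum of `u - w` its second derivative is nonpositive, so `F x u ≤ F x w` there. -/
lemma le_of_deriv_deriv_le (hF : ∀ x, StrictMono (F x)) (hT : T ≠ 0)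
    (hu : ContDiff ℝ 2 u) (hup : Periodic u T) (hu' : ∀ x, F x (u x) ≤ deriv (deriv u) x)
    (hw : ContDiff ℝ 2 w) (hwp : Periodic w T) (hw' : ∀ x, deriv (deriv w) x ≤ F x (w x))
    (x : ℝ) : u x ≤ w x := by
  have hc : Continuous fun x => u x - w x := hu.continuous.sub hw.continuous
  obtain ⟨a, ha⟩ := exists_forall_le_of_periodic hc (hup.sub hwp) hT
  have hmax : IsLocalMax (fun x => u x - w x) a := Filter.Eventually.of_forall ha
  have hdd := deriv_deriv_nonpos_of_isLocalMax hmax hc.continuousAt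
  rw [deriv_deriv_sub hu hw] at hdd
  have hFa : F a (u a) ≤ F a (w a) := by linarith [hu' a, hw' a]
  linarith [ha x, (hF a).le_iff_le.1 hFa]

lemma abs_le_div_of_deriv_deriv_eq (hM : 0 < M) (hT : T ≠ 0) (hv : ContDiff ℝ 2 v)
    (hvp : Periodic v T) (hv' : ∀ x, deriv (deriv v) x = M * v x - r x) (hr : ∀ x, |r x| ≤ R)
    (x : ℝ) : |v x| ≤ R / M := by
  have hF (x : ℝ) : StrictMono fun y => M * y - r x := fun y z hyz => by
    simpa using mul_lt_mul_of_pos_left hyz hM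
  have hconst (c : ℝ) : ContDiff ℝ 2 (fun _ : ℝ => c) := contDiff_const
  refine abs_le.2 ⟨?_, ?_⟩
  · refine le_of_deriv_deriv_le (u := fun _ => -(R / M)) hF hT (hconst _) (fun _ => rfl)
      (fun y => ?_) hv hvp (fun y => (hv' y).le) x
    simpa [mul_div_cancel₀ R hM.ne'] using (abs_le.1 (hr y)).1
  · refine le_of_deriv_deriv_le (w := fun _ => R / M) hF hT hv hvp (fun y => (hv' y).ge)
      (hconst _) (fun _ => rfl) (fun y => ?_) x
    simpa [mul_div_cancel₀ R hM.ne'] using (abs_le.1 (hr y)).2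

/- The solution is `(exp (k T) - 1)⁻¹ ∫ exp (k (t - x)) r t` over the period `[x, x + T]`. -/
lemma exists_periodic_hasDerivAt_sub_mul (hk : k ≠ 0) (hT : T ≠ 0) (hr : Continuous r)
    (hrp : Periodic r T) :
    ∃ v : ℝ → ℝ, Periodic v T ∧ ∀ x, HasDerivAt v (r x - k * v x) x := by
  set g : ℝ → ℝ := fun t => Real.exp (k * t) * r t with hg
  have hgc : Continuous g := by fun_prop
  have hgT (t : ℝ) : g (t + T) = Real.exp (k * T) * g t := by
    simp only [hg, hrp t, mul_add, Real.exp_add]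
    ring
  set J : ℝ → ℝ := fun x => ∫ t in x..x + T, g t with hJ
  have hJT (x : ℝ) : J (x + T) = Real.exp (k * T) * J x := by
    simp only [hJ]
    rw [← intervalIntegral.integral_comp_add_right, ← intervalIntegral.integral_const_mul]
    simp only [hgT]
  have hJd (x : ℝ) : HasDerivAt J ((Real.exp (k * T) - 1) * g x) x := by
    have hP (y : ℝ) : HasDerivAt (fun y => ∫ t in (0 : ℝ)..y, g t) (g y) y :=
      (hgc.integral_hasStrictDerivAt 0 y).hasDerivAt
    have hsub : J = fun x => (∫ t in (0 : ℝ)..x + T, g t) - ∫ t in (0 : ℝ)..x, g t :=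
      funext fun x => (intervalIntegral.integral_interval_sub_left
        (hgc.intervalIntegrable _ _) (hgc.intervalIntegrable _ _)).symm
    rw [hsub]
    refine (((hP (x + T)).comp_add_const x T).sub (hP x)).congr_deriv ?_
    rw [hgT]
    ring
  have hexp : Real.exp (k * T) - 1 ≠ 0 :=
    sub_ne_zero.2 (mt (Real.exp_eq_one_iff _).1 (mul_ne_zero hk hT))
  refine ⟨fun x => (Real.exp (k * T) - 1)⁻¹ * (Real.exp (-(k * x)) * J x), fun x => ?_,
    fun x => ?_⟩
  · simp only [hJT, mul_add, neg_add, Real.exp_add, Real.exp_neg (k * T)]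
    field_simp
  · have hE : HasDerivAt (fun x => Real.exp (-(k * x))) (Real.exp (-(k * x)) * -k) x := by
      simpa using (((hasDerivAt_id x).const_mul k).neg).exp
    refine ((hE.mul (hJd x)).const_mul (Real.exp (k * T) - 1)⁻¹).congr_deriv ?_
    simp only [hg, Real.exp_neg]
    field_simp
    ring

/- The operator factors as `D² - k² = (D + k)(D - k)`. -/
lemma exists_periodic_deriv_deriv_eq_sq_mul_sub (hk : k ≠ 0) (hT : T ≠ 0) (hr : Continuous r)
    (hrp : Periodic r T) :
    ∃ v : ℝ → ℝ, ContDiff ℝ 2 v ∧ Periodic v T ∧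
      ∀ x, deriv (deriv v) x = k ^ 2 * v x - r x := by
  obtain ⟨w, hwp, hwd⟩ := exists_periodic_hasDerivAt_sub_mul (neg_ne_zero.2 hk) hT hr.neg
    (hrp.comp Neg.neg)
  have hw : Differentiable ℝ w := fun x => (hwd x).differentiableAt
  obtain ⟨v, hvp, hvd⟩ := exists_periodic_hasDerivAt_sub_mul hk hT hw.continuous hwp
  have hv : Differentiable ℝ v := fun x => (hvd x).differentiableAt
  have hv' : deriv v = fun x => w x - k * v x := funext fun x => (hvd x).deriv
  have hvdd (x : ℝ) : HasDerivAt (deriv v) (k ^ 2 * v x - r x) x := by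
    rw [hv']
    exact ((hwd x).sub ((hvd x).const_mul k)).congr_deriv (by simp only [Pi.neg_apply]; ring)
  have hc : Continuous fun x => k ^ 2 * v x - r x := (continuous_const.mul hv.continuous).sub hr
  exact ⟨v, contDiff_two_iff_deriv.2 ⟨hv, contDiff_one_of_hasDerivAt hc hvdd⟩, hvp,
    fun x => (hvdd x).deriv⟩

lemma exists_continuousMap_deriv_deriv_eq_mul_sub (hM : 0 < M) (hT : T ≠ 0) (hr : Continuous r)
    (hrp : Periodic r T) :
    ∃ g : C(AddCircle T, ℝ), ContDiff ℝ 2 (fun x : ℝ => g x) ∧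
      ∀ x : ℝ, deriv (deriv fun x : ℝ => g x) x = M * g x - r x := by
  obtain ⟨v, hv, hvp, hvd⟩ :=
    exists_periodic_deriv_deriv_eq_sq_mul_sub (Real.sqrt_ne_zero'.2 hM) hT hr hrp
  simp only [Real.sq_sqrt hM.le] at hvd
  exact ⟨⟨hvp.lift, continuous_coinduced_dom.2 hv.continuous⟩, hv, hvd⟩

lemma dist_le_div_of_deriv_deriv_eq [Fact (0 < T)] {f g : C(AddCircle T, ℝ)} {p q : ℝ → ℝ}
    (hM : 0 < M) (hR : 0 ≤ R)
    (hf : ContDiff ℝ 2 fun x : ℝ => f x)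
    (hfd : ∀ x : ℝ, deriv (deriv fun x : ℝ => f x) x = M * f x - p x)
    (hg : ContDiff ℝ 2 fun x : ℝ => g x)
    (hgd : ∀ x : ℝ, deriv (deriv fun x : ℝ => g x) x = M * g x - q x)
    (hpq : ∀ x, |p x - q x| ≤ R) : dist f g ≤ R / M := by
  refine (ContinuousMap.dist_le (by positivity)).2 fun z => ?_
  induction z using QuotientAddGroup.induction_on with | _ x =>
  rw [Real.dist_eq]
  refine abs_le_div_of_deriv_deriv_eq (v := fun x : ℝ => f x - g x) hM
    (Fact.out : 0 < T).ne' (hf.sub hg) (fun x => by simp only [AddCircle.coe_add_period])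
    (fun x => ?_) hpq x
  rw [deriv_deriv_sub hf hg, hfd, hgd]
  ring

lemma abs_sub_le_of_monotone_sub (hm : Monotone fun y => g y - m * y)
    (hM : Monotone fun y => M * y - g y) (y z : ℝ) :
    |(M * y - g y) - (M * z - g z)| ≤ (M - m) * |y - z| := by
  wlog hyz : y ≤ z generalizing y z
  · rw [abs_sub_comm, abs_sub_comm y]
    exact this z y (le_of_not_ge hyz)
  have hlower := hm hyz
  have hupper := hM hyz
  rw [abs_of_nonpos (sub_nonpos.2 hupper), abs_of_nonpos (sub_nonpos.2 hyz)]
  dsimp only at hlower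
  linarith

/- Solve `v'' - M v = F x v - M v` by iteration: the right-hand side is Lipschitz in `v` with
constant `M - m`, and inverting `D² - M` gains a factor `1 / M`. -/
theorem exists_periodic_deriv_deriv_eq_of_monotone (hm : 0 < m) (hmM : m ≤ M) (hT : 0 < T)
    (hFc : Continuous (uncurry F)) (hFp : Periodic F T)
    (hFm : ∀ x, Monotone fun y => F x y - m * y) (hFM : ∀ x, Monotone fun y => M * y - F x y) :
    ∃ v : ℝ → ℝ, ContDiff ℝ 2 v ∧ Periodic v T ∧ ∀ x, deriv (deriv v) x = F x (v x) := by
  have hM : 0 < M := hm.trans_le hmM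
  have : Fact (0 < T) := ⟨hT⟩
  have hsolve (f : C(AddCircle T, ℝ)) : ∃ g : C(AddCircle T, ℝ),
      ContDiff ℝ 2 (fun x : ℝ => g x) ∧
      ∀ x : ℝ, deriv (deriv fun x : ℝ => g x) x = M * g x - (M * f x - F x (f x)) := by
    have hf : Continuous fun x : ℝ => f x := f.continuous.comp (AddCircle.continuous_mk' T)
    exact exists_continuousMap_deriv_deriv_eq_mul_sub hM hT.ne'
      ((continuous_const.mul hf).sub (hFc.comp (continuous_id.prodMk hf)))
      fun x => by simp only [AddCircle.coe_add_period, hFp x]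
  choose S hS hSd using hsolve
  have hS_dist (f g : C(AddCircle T, ℝ)) : dist (S f) (S g) ≤ (M - m) / M * dist f g := by
    rw [div_mul_eq_mul_div]
    refine dist_le_div_of_deriv_deriv_eq hM (mul_nonneg (sub_nonneg.2 hmM) dist_nonneg)
      (hS f) (hSd f) (hS g) (hSd g)
      fun x => (abs_sub_le_of_monotone_sub (hFm x) (hFM x) _ _).trans ?_
    gcongr
    rw [← Real.dist_eq]
    exact ContinuousMap.dist_apply_le_dist _
  have hL : 0 ≤ (M - m) / M := div_nonneg (sub_nonneg.2 hmM) hM.le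
  have hcontr : ContractingWith ((M - m) / M).toNNReal S := by
    refine ⟨?_, LipschitzWith.of_dist_le_mul fun f g => ?_⟩
    · rw [Real.toNNReal_lt_one, div_lt_one hM]
      linarith
    · rw [Real.coe_toNNReal _ hL]
      exact hS_dist f g
  obtain ⟨f, hf⟩ : ∃ f, S f = f := ⟨_, hcontr.fixedPoint_isFixedPt⟩
  have hfd := hSd f
  have hfc := hS f
  rw [hf] at hfd hfc
  exact ⟨fun x : ℝ => f x, hfc, fun x => by simp only [AddCircle.coe_add_period],
    fun x => by rw [hfd]; ring⟩

/-- The extension of `g` from `[lo, hi]` to the real line by affine functions of slope `M`. It is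
used to make bounds on the slopes of a nonlinearity on `[lo, hi]` global. -/
noncomputable def affineExtend (M : ℝ) (hlohi : lo ≤ hi) (g : ℝ → ℝ) (y : ℝ) : ℝ :=
  g (projIcc lo hi hlohi y) + M * (y - projIcc lo hi hlohi y)

lemma affineExtend_of_mem (hlohi : lo ≤ hi) (g : ℝ → ℝ) {y : ℝ} (hy : y ∈ Icc lo hi) :
    affineExtend M hlohi g y = g y := by
  simp [affineExtend, projIcc_of_mem hlohi hy]

lemma monotone_affineExtend_sub (hlohi : lo ≤ hi) (hmM : m ≤ M)
    (hg : MonotoneOn (fun y => g y - m * y) (Icc lo hi)) :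
    Monotone fun y => affineExtend M hlohi g y - m * y := fun y z hyz => by
  have hproj : (projIcc lo hi hlohi y : ℝ) ≤ projIcc lo hi hlohi z := monotone_projIcc hlohi hyz
  have hgap : (projIcc lo hi hlohi z : ℝ) - projIcc lo hi hlohi y ≤ z - y := by
    have := abs_projIcc_sub_projIcc hlohi (c := z) (d := y)
    rwa [abs_of_nonneg (sub_nonneg.2 hproj), abs_of_nonneg (sub_nonneg.2 hyz)] at this
  have hg' := hg (projIcc lo hi hlohi y).2 (projIcc lo hi hlohi z).2 hproj
  have := mul_le_mul_of_nonneg_left hgap (sub_nonneg.2 hmM)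
  simp only [affineExtend] at hg' ⊢
  linarith

lemma monotone_mul_sub_affineExtend (hlohi : lo ≤ hi)
    (hg : MonotoneOn (fun y => M * y - g y) (Icc lo hi)) :
    Monotone fun y => M * y - affineExtend M hlohi g y := fun y z hyz => by
  have hg' := hg (projIcc lo hi hlohi y).2 (projIcc lo hi hlohi z).2 (monotone_projIcc hlohi hyz)
  simp only [affineExtend] at hg' ⊢
  linarith

theorem exists_periodic_deriv_deriv_eq_between (hm : 0 < m) (hmM : m ≤ M) (hT : 0 < T)
    (hFc : ContinuousOn (uncurry F) (univ ×ˢ Icc lo hi)) (hFp : Periodic F T)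
    (hFm : ∀ x, MonotoneOn (fun y => F x y - m * y) (Icc lo hi))
    (hFM : ∀ x, MonotoneOn (fun y => M * y - F x y) (Icc lo hi))
    (hu : ContDiff ℝ 2 u) (hup : Periodic u T) (hu_mem : ∀ x, u x ∈ Icc lo hi)
    (hu' : ∀ x, F x (u x) ≤ deriv (deriv u) x)
    (hw : ContDiff ℝ 2 w) (hwp : Periodic w T) (hw_mem : ∀ x, w x ∈ Icc lo hi)
    (hw' : ∀ x, deriv (deriv w) x ≤ F x (w x)) :
    ∃ v : ℝ → ℝ, ContDiff ℝ 2 v ∧ Periodic v T ∧ (∀ x, v x ∈ Icc (u x) (w x)) ∧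
      ∀ x, deriv (deriv v) x = F x (v x) := by
  have hlohi : lo ≤ hi := (hu_mem 0).1.trans (hu_mem 0).2
  set G : ℝ → ℝ → ℝ := fun x => affineExtend M hlohi (F x) with hG
  have hGF {x y : ℝ} (hy : y ∈ Icc lo hi) : G x y = F x y := affineExtend_of_mem hlohi _ hy
  have hGm (x : ℝ) : Monotone fun y => G x y - m * y :=
    monotone_affineExtend_sub hlohi hmM (hFm x)
  have hG_strict (x : ℝ) : StrictMono (G x) := fun y z hyz => by
    linarith [hGm x hyz.le, mul_lt_mul_of_pos_left hyz hm]
  have hGc : Continuous (uncurry G) := by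
    have hproj : Continuous fun p : ℝ × ℝ => (projIcc lo hi hlohi p.2 : ℝ) :=
      continuous_subtype_val.comp (continuous_projIcc.comp continuous_snd)
    exact (hFc.comp_continuous (continuous_fst.prodMk hproj) fun p => ⟨mem_univ _,
      (projIcc lo hi hlohi p.2).2⟩).add (continuous_const.mul (continuous_snd.sub hproj))
  obtain ⟨v, hv, hvp, hv'⟩ := exists_periodic_deriv_deriv_eq_of_monotone hm hmM hT hGc
    (fun x => by simp only [hG, hFp x]) hGm fun x => monotone_mul_sub_affineExtend hlohi (hFM x)
  have huv (x : ℝ) : u x ≤ v x :=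
    le_of_deriv_deriv_le hG_strict hT.ne' hu hup (fun x => by rw [hGF (hu_mem x)]; exact hu' x)
      hv hvp (fun x => (hv' x).le) x
  have hvw (x : ℝ) : v x ≤ w x :=
    le_of_deriv_deriv_le hG_strict hT.ne' hv hvp (fun x => (hv' x).ge)
      hw hwp (fun x => by rw [hGF (hw_mem x)]; exact hw' x) x
  exact ⟨v, hv, hvp, fun x => ⟨huv x, hvw x⟩,
    fun x => by rw [hv', hGF ⟨(hu_mem x).1.trans (huv x), (hvw x).trans (hw_mem x).2⟩]⟩

end PeriodicBoundaryValueProblem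

section SingularEquation

variable {A h v w : ℝ → ℝ} {β γ κ lo hi s T : ℝ}

lemma monotoneOn_neg_div_sub (hκ : 0 ≤ κ) (hlo : 0 < lo) :
    MonotoneOn (fun y => -(κ / y) - κ / hi ^ 2 * y) (Icc lo hi) := fun y hy z hz hyz => by
  have hy₀ : 0 < y := hlo.trans_le hy.1
  have hz₀ : 0 < z := hlo.trans_le hz.1
  have hslope : κ / hi ^ 2 ≤ κ / (y * z) := by
    rw [sq]
    gcongr
    exacts [hy₀.le.trans hy.2, hy.2, hz.2]
  have hdiff : κ / y - κ / z = κ / (y * z) * (z - y) := by field_simp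
  have := mul_le_mul_of_nonneg_right hslope (sub_nonneg.2 hyz)
  dsimp only
  linarith

lemma monotoneOn_mul_add_div (hκ : 0 ≤ κ) (hlo : 0 < lo) :
    MonotoneOn (fun y => κ / lo ^ 2 * y + κ / y) (Ici lo) := fun y hy z hz hyz => by
  have hy₀ : 0 < y := hlo.trans_le hy
  have hz₀ : 0 < z := hlo.trans_le hz
  have hslope : κ / (y * z) ≤ κ / lo ^ 2 := by
    rw [sq]
    gcongr
    exacts [hy, hz]
  have hdiff : κ / y - κ / z = κ / (y * z) * (z - y) := by field_simp
  have := mul_le_mul_of_nonneg_right hslope (sub_nonneg.2 hyz)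
  dsimp only
  linarith

lemma exists_periodic_deriv_deriv_eq_sub_div_ge (hκ : 0 < κ) (hT : 0 < T) (hh : Continuous h)
    (hhp : Periodic h T) (hlo : 0 < lo) (hlo' : ∀ x, h x ≤ κ / lo) (hw : ContDiff ℝ 2 w)
    (hwp : Periodic w T) (hlo_w : ∀ x, lo ≤ w x)
    (hw' : ∀ x, deriv (deriv w) x ≤ h x - κ / w x) :
    ∃ v : ℝ → ℝ, ContDiff ℝ 2 v ∧ Periodic v T ∧ (∀ x, lo ≤ v x) ∧
      ∀ x, deriv (deriv v) x = h x - κ / v x := by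
  obtain ⟨b, hb⟩ := exists_forall_le_of_periodic hw.continuous hwp hT.ne'
  have hlo_b : lo ≤ w b := hlo_w b
  have hFc : ContinuousOn (uncurry fun x y => h x - κ / y) (univ ×ˢ Icc lo (w b)) :=
    (hh.comp continuous_fst).continuousOn.sub
      (continuousOn_const.div continuousOn_snd fun q hq => (hlo.trans_le hq.2.1).ne')
  have hFm (x : ℝ) : MonotoneOn (fun y => h x - κ / y - κ / w b ^ 2 * y) (Icc lo (w b)) := by
    simpa only [sub_eq_add_neg, add_assoc] using
      (monotoneOn_neg_div_sub hκ.le hlo).const_add (h x)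
  have hFM (x : ℝ) : MonotoneOn (fun y => κ / lo ^ 2 * y - (h x - κ / y)) (Icc lo (w b)) := by
    simpa only [sub_sub_eq_add_sub, neg_add_eq_sub, add_comm] using
      ((monotoneOn_mul_add_div hκ.le hlo).mono Icc_subset_Ici_self).const_add (-h x)
  obtain ⟨v, hv, hvp, hv_mem, hvd⟩ := exists_periodic_deriv_deriv_eq_between
    (u := fun _ => lo) (div_pos hκ (pow_pos (hlo.trans_le hlo_b) 2)) (by gcongr) hT hFc
    (fun x => by simp only [hhp x]) hFm hFM
    contDiff_const (fun _ => rfl) (fun _ => left_mem_Icc.2 hlo_b) (fun x => by simpa using hlo' x)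
    hw hwp (fun x => ⟨hlo_w x, hb x⟩) hw'
  exact ⟨v, hv, hvp, fun x => (hv_mem x).1, hvd⟩

/- With `μ` the mean of `h`, `w'' = h - μ` and `w ≥ κ / μ` make `w` an upper solution, and a small
constant is a lower solution. This is the attractive case of a theorem of Lazer and Solimini. -/
theorem exists_periodic_pos_deriv_deriv_eq_sub_div (hκ : 0 < κ) (hT : 0 < T) (hh : Continuous h)
    (hhp : Periodic h T) (hint : 0 < ∫ x in (0 : ℝ)..T, h x) :
    ∃ v : ℝ → ℝ, ContDiff ℝ 2 v ∧ Periodic v T ∧ (∀ x, 0 < v x) ∧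
      ∀ x, deriv (deriv v) x = h x - κ / v x := by
  set μ : ℝ := (∫ x in (0 : ℝ)..T, h x) / T
  have hμ : 0 < μ := div_pos hint hT
  obtain ⟨w, hw, hwp, hwd, -, hw_ge⟩ := exists_periodic_deriv_deriv_eq_isLeast (κ / μ)
    (r := fun x => h x - μ) (hh.sub continuous_const) (fun x => by simp only [hhp x])
    (integral_sub_integral_div_eq_zero (hh.intervalIntegrable _ _) hT.ne') hT.ne'
  replace hw_ge (x : ℝ) : κ / μ ≤ w x := hw_ge (mem_range_self x)
  have hw_upper (x : ℝ) : deriv (deriv w) x ≤ h x - κ / w x := by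
    rw [hwd]
    gcongr
    exact (div_le_comm₀ ((div_pos hκ hμ).trans_le (hw_ge x)) hμ).2 (hw_ge x)
  obtain ⟨d, hd⟩ := exists_forall_le_of_periodic hh hhp hT.ne'
  set H : ℝ := max (h d) μ
  have hH : 0 < H := lt_max_of_lt_right hμ
  have hH_lower (x : ℝ) : h x ≤ κ / (κ / H) := by
    rw [div_div_cancel₀ hκ.ne']
    exact (hd x).trans (le_max_left _ _)
  have hH_w (x : ℝ) : κ / H ≤ w x :=
    (div_le_div_of_nonneg_left hκ.le hμ (le_max_right _ _)).trans (hw_ge x)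
  obtain ⟨v, hv, hvp, hv_ge, hvd⟩ := exists_periodic_deriv_deriv_eq_sub_div_ge hκ hT hh hhp
    (div_pos hκ hH) hH_lower hw hwp hH_w hw_upper
  exact ⟨v, hv, hvp, fun x => (div_pos hκ hH).trans_le (hv_ge x), hvd⟩

lemma mul_integral_one_div_eq_of_deriv_deriv_eq (hh : Continuous h) (hv : ContDiff ℝ 2 v)
    (hvp : Periodic v T) (hv₀ : ∀ x, 0 < v x) (hvd : ∀ x, deriv (deriv v) x = h x - κ / v x) :
    κ * ∫ x in (0 : ℝ)..T, 1 / v x = ∫ x in (0 : ℝ)..T, h x := by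
  have hc : Continuous fun x => κ * (1 / v x) :=
    continuous_const.mul (continuous_const.div hv.continuous fun x => (hv₀ x).ne')
  have hzero := integral_deriv_eq_zero_of_periodic (contDiff_two_iff_deriv.1 hv).2
    (periodic_deriv hvp)
  simp only [hvd, div_eq_mul_one_div κ] at hzero
  rw [intervalIntegral.integral_sub (hh.intervalIntegrable _ _) (hc.intervalIntegrable _ _),
    intervalIntegral.integral_const_mul] at hzero
  linarith

lemma contDiff_infty_of_deriv_deriv_eq_sub_div (hh : ContDiff ℝ ∞ h) (hv : ContDiff ℝ 2 v)
    (hv₀ : ∀ x, v x ≠ 0) (hvd : ∀ x, deriv (deriv v) x = h x - κ / v x) : ContDiff ℝ ∞ v :=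
  contDiff_infty_of_bootstrap hv fun n hvn => by
    rw [funext hvd]
    exact (contDiff_infty.1 hh n).sub (contDiff_const.div hvn hv₀)

theorem exists_periodic_pos_deriv_deriv_eq_sub_div_integral_eq (hκ : 0 ≤ κ) (hs : 0 < s)
    (hT : 0 < T) (hh : Continuous h) (hhp : Periodic h T)
    (hint : ∫ x in (0 : ℝ)..T, h x = κ * s) :
    ∃ v : ℝ → ℝ, ContDiff ℝ 2 v ∧ Periodic v T ∧ (∀ x, 0 < v x) ∧
      (∀ x, deriv (deriv v) x = h x - κ / v x) ∧ ∫ x in (0 : ℝ)..T, 1 / v x = s := by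
  obtain rfl | hκ := hκ.eq_or_lt
  · obtain ⟨u, hu, hup, hud, ⟨a, ha⟩, hu_ge⟩ :=
      exists_periodic_deriv_deriv_eq_isLeast 0 hh hhp (by simpa using hint) hT.ne'
    have hu₀ (x : ℝ) : 0 ≤ u x := hu_ge (mem_range_self x)
    obtain ⟨K, hK⟩ := exists_lipschitzWith_of_periodic (hu.of_le one_le_two) hup hT.ne'
    obtain ⟨C, hC, hCs⟩ := exists_pos_integral_one_div_add_const_eq hK hup hT hu₀ ha hs
    refine ⟨fun x => u x + C, hu.add contDiff_const, fun x => by simp only [hup x],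
      fun x => add_pos_of_nonneg_of_pos (hu₀ x) hC, fun x => ?_, hCs⟩
    simp [hud]
  · obtain ⟨v, hv, hvp, hv₀, hvd⟩ := exists_periodic_pos_deriv_deriv_eq_sub_div hκ hT hh hhp
      (hint ▸ mul_pos hκ hs)
    exact ⟨v, hv, hvp, hv₀, hvd, mul_left_cancel₀ hκ.ne'
      ((mul_integral_one_div_eq_of_deriv_deriv_eq hh hv hvp hv₀ hvd).trans hint)⟩

lemma exists_periodic_one_add_deriv_deriv_eq (hh : ContDiff ℝ ∞ h) (hhp : Periodic h T)
    (hint : ∫ x in (0 : ℝ)..T, h x = T) (hT : T ≠ 0) :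
    ∃ φ : ℝ → ℝ, ContDiff ℝ ∞ φ ∧ Periodic φ T ∧ ∀ x, 1 + deriv (deriv φ) x = h x := by
  have hh₁ : ContDiff ℝ ∞ fun x => h x - 1 := hh.sub contDiff_const
  obtain ⟨φ, hφ, hφp, hφd⟩ := exists_periodic_deriv_deriv_eq hh₁.continuous
    (fun x => by simp only [hhp x]) (by
      rw [intervalIntegral.integral_sub (hh.continuous.intervalIntegrable _ _) (by simp), hint]
      simp) hT
  refine ⟨φ, contDiff_infty_of_bootstrap hφ fun n _ => ?_, hφp, fun x => by rw [hφd]; ring⟩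
  rw [funext hφd]
  exact contDiff_infty.1 hh₁ n

theorem exists_periodic_potential (hβ : 0 ≤ β) (hT : 0 < T) (hA : ContDiff ℝ ∞ A)
    (hAp : Periodic A T) (hint : ∫ x in (0 : ℝ)..T, A x = -((β + γ) * T)) :
    ∃ φ : ℝ → ℝ, ContDiff ℝ ∞ φ ∧ Periodic φ T ∧ (∀ x, 0 < 1 + deriv (deriv φ) x) ∧
      ∀ x, -(1 / 4) * deriv (deriv fun y => 1 / (1 + deriv (deriv φ) y)) x
        - β * (1 + deriv (deriv φ) x) - γ = A x := by
  have hh : ContDiff ℝ ∞ fun x => -4 * (A x + γ) := contDiff_const.mul (hA.add contDiff_const)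
  have hh_int : ∫ x in (0 : ℝ)..T, -4 * (A x + γ) = 4 * β * T := by
    rw [intervalIntegral.integral_const_mul, intervalIntegral.integral_add
      (hA.continuous.intervalIntegrable _ _) (by simp), hint]
    simp
    ring
  obtain ⟨v, hv, hvp, hv₀, hvd, hv_int⟩ := exists_periodic_pos_deriv_deriv_eq_sub_div_integral_eq
    (by positivity) hT hT hh.continuous (fun x => by simp only [hAp x]) hh_int
  have hv_smooth : ContDiff ℝ ∞ v :=
    contDiff_infty_of_deriv_deriv_eq_sub_div hh hv (fun x => (hv₀ x).ne') hvd
  obtain ⟨φ, hφ, hφp, hφd⟩ := exists_periodic_one_add_deriv_deriv_eq (h := fun x => 1 / v x)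
    (contDiff_const.div hv_smooth fun x => (hv₀ x).ne') (fun x => by simp only [hvp x])
    hv_int hT.ne'
  refine ⟨φ, hφ, hφp, fun x => hφd x ▸ one_div_pos.2 (hv₀ x), fun x => ?_⟩
  simp only [hφd, one_div_one_div, hvd]
  ring

end SingularEquation

/-- Solvability of the reduced small radius limit ODE on the abelian
    surface with one-variable data, under det F⁰ = ac − b² > 0. -/
theorem stmt_16 (α a b c : ℝ) (hα : 0 < α) (hdet : 0 < a * c - b ^ 2)
    (A : ℝ → ℝ) (hA : ContDiff ℝ (⊤ : ℕ∞) A) (hAper : Function.Periodic A 1)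
    (hint : ∫ x in (0 : ℝ)..1, A x = -(α * (a * c - b ^ 2))) :
    ∃ φ : ℝ → ℝ, ContDiff ℝ (⊤ : ℕ∞) φ ∧ Function.Periodic φ 1 ∧
      (∀ x, 0 < 1 + deriv (deriv φ) x) ∧
      ∀ x, -(1 / 4) * deriv (deriv (fun y => 1 / (1 + deriv (deriv φ) y))) x
            - α * b ^ 2 * (a * c - b ^ 2) * (1 + deriv (deriv φ) x) / (b ^ 2 + c ^ 2)
            - α * c ^ 2 * (a * c - b ^ 2) / (b ^ 2 + c ^ 2) = A x := by
  have hc : c ≠ 0 := by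
    rintro rfl
    nlinarith [sq_nonneg b]
  have hsum : α * (a * c - b ^ 2) = (α * b ^ 2 * (a * c - b ^ 2) / (b ^ 2 + c ^ 2) +
      α * c ^ 2 * (a * c - b ^ 2) / (b ^ 2 + c ^ 2)) * 1 := by
    field_simp
  simpa only [div_mul_eq_mul_div] using
    exists_periodic_potential (by positivity) one_pos hA hAper (hint.trans (congrArg _ hsum))
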